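/- (Leibniz type rule for the classical Caputo derivative.) Let 0 < α < 1 and a < b. Suppose f, g : ℝ → ℝ are real-analytic with everywhere-convergent power series. Then for every x ∈ (a,b): (^{C}D^{α}(f·g))(x) = Σ_{m=0}^∞ binom(α, m) f⁽ᵐ⁾(x) (^{C}D^{α−m} g)(x) + g(a)(f(x) − f(a)) (x − a)^{−α} / Γ(1−α), where f⁽ᵐ⁾ is the ordinary m-th derivative of f and the series converges. -/

import Mathlib

open Real

/-- Generalized binomial coefficient `binom(γ, n) = γ(γ-1)⋯(γ-n+1)/n!`. -/
noncomputable def genBinom (γ : ℝ) (n : ℕ) : ℝ :=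
  (∏ i ∈ Finset.range n, (γ - (i : ℝ))) / (n.factorial : ℝ)

/-- Ψ-Riemann–Liouville fractional integral of order `α` with base point `a`;
by convention the order-0 integral is the identity. -/
noncomputable def psiI (a : ℝ) (Ψ f : ℝ → ℝ) (α : ℝ) (x : ℝ) : ℝ :=
  if α = 0 then f x
  else (Real.Gamma α)⁻¹ * ∫ t in a..x, deriv Ψ t * (Ψ x - Ψ t) ^ (α - 1) * f t

/-- Ψ-Riemann–Liouville fractional derivative of order `γ` (for `γ ≤ 0` it is the
fractional integral of order `-γ`, the order-0 case being the identity). -/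
noncomputable def psiRLD (a : ℝ) (Ψ f : ℝ → ℝ) (γ : ℝ) (x : ℝ) : ℝ :=
  if γ ≤ 0 then psiI a Ψ f (-γ) x
  else (deriv Ψ x)⁻¹ * deriv (fun y => psiI a Ψ f (1 - γ) y) x

/-- Ψ-Caputo fractional derivative of order `γ` (for `γ ≤ 0` it is the
fractional integral of order `-γ`). -/
noncomputable def psiCD (a : ℝ) (Ψ f : ℝ → ℝ) (γ : ℝ) (x : ℝ) : ℝ :=
  if γ ≤ 0 then psiI a Ψ f (-γ) x
  else psiI a Ψ (fun t => (deriv Ψ t)⁻¹ * deriv f t) (1 - γ) x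

/-- Ψ-Hilfer fractional derivative of order `α` and type `β`. -/
noncomputable def psiHD (a : ℝ) (Ψ f : ℝ → ℝ) (α β : ℝ) (x : ℝ) : ℝ :=
  psiI a Ψ
    (fun y => (deriv Ψ y)⁻¹ * deriv (fun z => psiI a Ψ f ((1 - β) * (1 - α)) z) y)
    (β * (1 - α)) x

/-- Classical Riemann–Liouville fractional integral with base point `a`. -/
noncomputable def rlI (a : ℝ) (α : ℝ) (f : ℝ → ℝ) (x : ℝ) : ℝ :=
  if α = 0 then f x
  else (Real.Gamma α)⁻¹ * ∫ t in a..x, (x - t) ^ (α - 1) * f t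

/-- Classical Riemann–Liouville fractional derivative (fractional integral for `γ ≤ 0`). -/
noncomputable def rlD (a : ℝ) (γ : ℝ) (f : ℝ → ℝ) (x : ℝ) : ℝ :=
  if γ ≤ 0 then rlI a (-γ) f x
  else deriv (fun y => rlI a (1 - γ) f y) x

/-- Classical Caputo fractional derivative (fractional integral for `γ ≤ 0`). -/
noncomputable def capD (a : ℝ) (γ : ℝ) (f : ℝ → ℝ) (x : ℝ) : ℝ :=
  if γ ≤ 0 then rlI a (-γ) f x
  else rlI a (1 - γ) (deriv f) x

/-- Classical Hilfer fractional derivative of order `α` and type `β`. -/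
noncomputable def hilD (a : ℝ) (α β : ℝ) (f : ℝ → ℝ) (x : ℝ) : ℝ :=
  rlI a (β * (1 - α))
    (fun y => deriv (fun z => rlI a ((1 - β) * (1 - α)) f z) y) x

/-- Hadamard fractional integral with base point `a`. -/
noncomputable def hadI (a : ℝ) (α : ℝ) (f : ℝ → ℝ) (x : ℝ) : ℝ :=
  if α = 0 then f x
  else (Real.Gamma α)⁻¹ * ∫ t in a..x, (Real.log x - Real.log t) ^ (α - 1) * f t / t

/-- Caputo–Hadamard fractional derivative (Hadamard fractional integral for `γ ≤ 0`). -/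
noncomputable def chD (a : ℝ) (γ : ℝ) (f : ℝ → ℝ) (x : ℝ) : ℝ :=
  if γ ≤ 0 then hadI a (-γ) f x
  else hadI a (1 - γ) (fun t => t * deriv f t) x

/-- `h` is real-analytic with a power series converging on all of `ℝ`. -/
def EntireReal (h : ℝ → ℝ) : Prop :=
  ∃ p : FormalMultilinearSeries ℝ ℝ ℝ, HasFPowerSeriesOnBall h p 0 ⊤


lemma hasSum_transfer {f g : ℕ → ℝ} {a b : ℝ} (h : HasSum g b) (hf : ∀ n, f n = g n)
    (hab : a = b) : HasSum f a := by
  rw [hab, show f = g from funext hf]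
  exact h

lemma EntireReal.taylor {f : ℝ → ℝ} (hf : EntireReal f) (x t : ℝ) :
    HasSum (fun m : ℕ => iteratedDeriv m f x / (m.factorial : ℝ) * (t - x) ^ m) (f t) := by
  obtain ⟨p, hp⟩ := hf
  have h1 := hp.changeOrigin (y := x) (by simp)
  have h2 := h1.hasSum_iteratedFDeriv (y := t - x) (by simp)
  simp only [zero_add, add_sub_cancel] at h2
  refine hasSum_transfer h2 (fun m => ?_) rfl
  rw [iteratedFDeriv_apply_eq_iteratedDeriv_mul_prod]
  simp
  ring

lemma EntireReal.analytic {f : ℝ → ℝ} (hf : EntireReal f) (x : ℝ) : AnalyticAt ℝ f x := by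
  obtain ⟨p, hp⟩ := hf
  exact hp.analyticOnNhd x (by simp)

lemma genBinom_gamma (α : ℝ) (hα1 : α < 1) (n : ℕ) :
    genBinom α (n + 1) * (Real.Gamma (n + 1 - α))⁻¹
      = α * (-1) ^ n / ((n + 1).factorial : ℝ) * (Real.Gamma (1 - α))⁻¹ := by
  have hG : ∀ n : ℕ, 0 < Real.Gamma (n + 1 - α) := fun n =>
    Real.Gamma_pos_of_pos (by have : (0 : ℝ) ≤ n := n.cast_nonneg
                              linarith)
  have hG0 : 0 < Real.Gamma (1 - α) := Real.Gamma_pos_of_pos (by linarith)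
  have key : (∏ i ∈ Finset.range (n + 1), (α - (i : ℝ))) * Real.Gamma (1 - α)
      = α * (-1) ^ n * Real.Gamma (n + 1 - α) := by
    induction n with
    | zero => simp
    | succ k ih =>
      rw [Finset.prod_range_succ]
      have hk : (0 : ℝ) < k + 1 - α := by
        have : (0 : ℝ) ≤ k := k.cast_nonneg
        linarith
      have : Real.Gamma (((k + 1 : ℕ) : ℝ) + 1 - α) = (k + 1 - α) * Real.Gamma (k + 1 - α) := by
        rw [← Real.Gamma_add_one hk.ne']
        congr 1
        push_cast
        ring
      rw [this, mul_right_comm, ih]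
      push_cast
      ring
  unfold genBinom
  have h1 := (hG n).ne'
  have h2 := hG0.ne'
  have h3 : ((n + 1).factorial : ℝ) ≠ 0 := by positivity
  field_simp
  linear_combination key

lemma rpow_split {α : ℝ} (hα0 : 0 < α) (hα1 : α < 1) (n : ℕ) {y : ℝ} (hy : 0 ≤ y) :
    y ^ ((n : ℝ) + 1 - α - 1) = y ^ n * y ^ (-α) := by
  rcases hy.eq_or_lt with h | h
  · subst h
    have hz : (0 : ℝ) ^ (-α) = 0 := Real.zero_rpow (by linarith)
    rw [hz, mul_zero, Real.zero_rpow]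
    intro h0
    rcases Nat.eq_zero_or_pos n with h | h
    · subst h
      simp at h0
      linarith
    · have : (1 : ℝ) ≤ n := by exact_mod_cast h
      linarith
  · rw [← Real.rpow_natCast, ← Real.rpow_add h]
    congr 1
    ring

/-- Leibniz type rule for the classical Caputo fractional derivative. -/
theorem leibniz_classical_Caputo
    (a b : ℝ) (hab : a < b) (α : ℝ) (hα0 : 0 < α) (hα1 : α < 1)
    (f g : ℝ → ℝ) (hf : EntireReal f) (hg : EntireReal g)
    (x : ℝ) (hx : x ∈ Set.Ioo a b) :
    HasSum
      (fun m : ℕ => genBinom α m * iteratedDeriv m f x * capD a (α - m) g x)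
      (capD a α (fun t => f t * g t) x -
        g a * (f x - f a) * (x - a) ^ (-α) / Real.Gamma (1 - α)) := by
  have hax : a < x := hx.1
  have hxa : 0 < x - a := sub_pos.2 hax
  have hfd : Differentiable ℝ f := fun t => (hf.analytic t).differentiableAt
  have hgd : Differentiable ℝ g := fun t => (hg.analytic t).differentiableAt
  have hfc' : Continuous (deriv f) :=
    continuous_iff_continuousAt.2 fun t => (hf.analytic t).deriv.continuousAt
  have hgc' : Continuous (deriv g) :=
    continuous_iff_continuousAt.2 fun t => (hg.analytic t).deriv.continuousAt
  have hfc := hfd.continuous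
  have hgc := hgd.continuous
  set q : ℝ → ℝ := dslope f x with hq
  have hqc : Continuous q := by
    rw [← continuousOn_univ]
    exact (continuousOn_dslope Filter.univ_mem).2 ⟨hfc.continuousOn, hfd x⟩
  have hqe : ∀ t, (t - x) * q t = f t - f x := fun t => sub_smul_dslope f x t
  clear_value q
  set c : ℕ → ℝ := fun m => iteratedDeriv m f x / (m.factorial : ℝ) with hc
  have hT : ∀ t, HasSum (fun m => c m * (t - x) ^ m) (f t) := hf.taylor x
  have hT1 : ∀ t, t ≠ x → HasSum (fun n => c (n + 1) * (t - x) ^ n) (q t) := by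
    intro t ht
    have h0 : t - x ≠ 0 := sub_ne_zero.2 ht
    have h1 := ((hasSum_nat_add_iff' 1).2 (hT t)).mul_right ((t - x)⁻¹)
    have h2 : q t = (f t - f x) * (t - x)⁻¹ := by
      rw [← hqe]
      field_simp
    rw [h2]
    have h3 : c 0 = f x := by simp [hc]
    simp only [Finset.range_one, Finset.sum_singleton, pow_zero, mul_one, h3] at h1
    refine hasSum_transfer h1 (fun n => ?_) rfl
    rw [pow_succ]
    field_simp
  -- the weight
  set w : ℝ → ℝ := fun t => (x - t) ^ (-α) with hw
  have hwi : IntervalIntegrable w MeasureTheory.volume a x := by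
    have := (intervalIntegral.intervalIntegrable_rpow' (a := x - a) (b := 0) (r := -α)
      (by linarith)).comp_sub_left x
    simpa using this
  have hwx : w x = 0 := by
    simp only [hw, sub_self]
    exact Real.zero_rpow (by linarith)
  have hwn : ∀ t, t ≤ x → 0 ≤ w t := fun t ht => Real.rpow_nonneg (by linarith) _
  have hwc : ∀ h : ℝ → ℝ, Continuous h →
      IntervalIntegrable (fun t => w t * h t) MeasureTheory.volume a x :=
    fun h hh => hwi.mul_continuousOn hh.continuousOn
  obtain ⟨C, hC⟩ := (isCompact_Icc (a := a) (b := x)).exists_bound_of_continuousOn hgc.continuousOn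
  have hC0 : 0 ≤ C := (norm_nonneg _).trans (hC a ⟨le_rfl, hax.le⟩)
  have hsum : Summable fun n => |c (n + 1)| * (x - a) ^ n := by
    have := (hT1 a hax.ne).summable.abs
    refine this.congr fun n => ?_
    rw [abs_mul, abs_pow, abs_sub_comm, abs_of_pos hxa]
  -- series of integrals
  have hS : HasSum (fun n => ∫ t in a..x, w t * ((-1) ^ n * c (n + 1) * (x - t) ^ n * g t))
      (∫ t in a..x, w t * (q t * g t)) := by
    refine intervalIntegral.hasSum_integral_of_dominated_convergence
      (fun n t => |c (n + 1)| * (x - a) ^ n * (C * w t)) ?_ ?_ ?_ ?_ ?_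
    · intro n
      have := hwc (fun t => (-1) ^ n * c (n + 1) * (x - t) ^ n * g t) (by fun_prop)
      rw [Set.uIoc_of_le hax.le]
      exact this.1.aestronglyMeasurable
    · intro n
      refine Filter.Eventually.of_forall fun t ht => ?_
      rw [Set.uIoc_of_le hax.le] at ht
      have h1 : ‖g t‖ ≤ C := hC t ⟨ht.1.le, ht.2⟩
      have h2 : 0 ≤ x - t := sub_nonneg.2 ht.2
      have h3 := hwn t ht.2
      have h4 : (x - t) ^ n ≤ (x - a) ^ n := pow_le_pow_left₀ h2 (by linarith [ht.1]) n
      simp only [norm_mul, norm_pow, norm_neg, norm_one, one_pow, one_mul, Real.norm_eq_abs] at *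
      rw [abs_of_nonneg h3, abs_of_nonneg h2]
      calc w t * (|c (n + 1)| * (x - t) ^ n * |g t|)
          ≤ w t * (|c (n + 1)| * (x - a) ^ n * C) := by gcongr
        _ = _ := by ring
    · exact Filter.Eventually.of_forall fun t ht => hsum.mul_right _
    · simp_rw [tsum_mul_right]
      exact (hwi.const_mul C).const_mul _
    · refine Filter.Eventually.of_forall fun t ht => ?_
      rcases eq_or_ne t x with rfl | htx
      · simp [hwx, hasSum_zero]
      · have := ((hT1 t htx).mul_right (g t)).mul_left (w t)
        refine hasSum_transfer this (fun n => ?_) rfl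
        rw [← neg_sub x t, neg_pow (x - t)]
        ring
  -- integration by parts
  have hI : ∫ t in a..x, w t * (-α * (q t * g t) + (deriv (fun t => f t * g t) t - f x * deriv g t))
      = g a * (f x - f a) * (x - a) ^ (-α) := by
    have hd : ∀ t, deriv (fun t => f t * g t) t = deriv f t * g t + f t * deriv g t :=
      fun t => deriv_fun_mul (hfd t) (hgd t)
    have hGe : ∀ t, t < x → (x - t) ^ (1 - α) * (-(q t * g t)) = w t * ((f t - f x) * g t) := by
      intro t ht
      have h0 : 0 < x - t := sub_pos.2 ht
      have : (x - t) ^ (1 - α) = (x - t) * w t := by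
        rw [hw, sub_eq_add_neg 1 α, Real.rpow_add h0, Real.rpow_one]
      rw [this, ← hqe]
      ring
    have := intervalIntegral.integral_eq_sub_of_hasDerivAt_of_le (a := a) (b := x)
      (f := fun t => (x - t) ^ (1 - α) * (-(q t * g t)))
      (f' := fun t => w t * (-α * (q t * g t) +
        (deriv (fun t => f t * g t) t - f x * deriv g t))) hax.le ?_ ?_ ?_
    · rw [this, hGe a hax]
      simp only [sub_self, hw]
      rw [Real.zero_rpow (by linarith)]
      ring
    · refine Continuous.continuousOn (Continuous.mul ?_ (by fun_prop))
      exact Continuous.rpow_const (by fun_prop) fun t => Or.inr (by linarith)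
    · intro t ht
      have h0 : 0 < x - t := sub_pos.2 ht.2
      have hwd : HasDerivAt w (α * (x - t) ^ (-α - 1)) t := by
        have := ((hasDerivAt_id t).const_sub x).rpow_const (p := -α) (Or.inl h0.ne')
        refine this.congr_deriv ?_
        simp
      have h2 := hwd.mul (((hfd t).hasDerivAt.sub_const (f x)).mul (hgd t).hasDerivAt)
      have h3 : (fun t => (x - t) ^ (1 - α) * (-(q t * g t))) =ᶠ[nhds t]
          (w * ((fun t => f t - f x) * g)) := by
        filter_upwards [Iio_mem_nhds ht.2] with s hs
        exact hGe s hs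
      refine (h2.congr_of_eventuallyEq h3).congr_deriv ?_
      have h4 : (x - t) ^ (-α - 1) * (x - t) = w t := by
        rw [Real.rpow_sub_one h0.ne', div_mul_cancel₀ _ h0.ne']
      simp only [Pi.mul_apply, hd]
      rw [← hqe t, ← h4]
      have h5 := hqe t
      linear_combination ((x - t) ^ (-α - 1) * (x - t) * deriv g t) * h5
    · apply hwc
      simp_rw [hd]
      fun_prop
  have hI2 : ∫ t in a..x, w t * (-α * (q t * g t) + (deriv (fun t => f t * g t) t - f x * deriv g t))
      = -α * (∫ t in a..x, w t * (q t * g t)) + ((∫ t in a..x, w t * deriv (fun t => f t * g t) t)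
        - f x * ∫ t in a..x, w t * deriv g t) := by
    have i1 := hwc (fun t => q t * g t) (by fun_prop)
    have i2 := hwc (deriv (fun t => f t * g t)) (by
      have hd : deriv (fun t => f t * g t) = fun t => deriv f t * g t + f t * deriv g t :=
        funext fun t => deriv_fun_mul (hfd t) (hgd t)
      rw [hd]
      fun_prop)
    have i3 := hwc (deriv g) hgc'
    rw [← intervalIntegral.integral_const_mul, ← intervalIntegral.integral_const_mul,
      ← intervalIntegral.integral_sub i2 (i3.const_mul _),
      ← intervalIntegral.integral_add (i1.const_mul _) (i2.sub (i3.const_mul _))]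
    congr 1
    ext t
    ring
  have hG0 : Real.Gamma (1 - α) ≠ 0 := (Real.Gamma_pos_of_pos (by linarith)).ne'
  have hcap : ∀ h : ℝ → ℝ, capD a α h x
      = (Real.Gamma (1 - α))⁻¹ * ∫ t in a..x, w t * deriv h t := by
    intro h
    unfold capD rlI
    rw [if_neg (by linarith), if_neg (by linarith)]
    simp only [hw]
    rw [show 1 - α - 1 = -α by ring]
  rw [← hasSum_nat_add_iff' 1]
  refine hasSum_transfer (hS.mul_left (α * (Real.Gamma (1 - α))⁻¹)) (fun n => ?_) ?_
  · have hn : (0 : ℝ) ≤ n := n.cast_nonneg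
    unfold capD rlI
    push_cast
    rw [if_pos (by linarith), if_neg (by linarith)]
    have e : -(α - ((n : ℝ) + 1)) = n + 1 - α := by ring
    rw [e]
    have e2 : ∫ t in a..x, w t * ((-1) ^ n * c (n + 1) * (x - t) ^ n * g t)
        = (-1) ^ n * c (n + 1) * ∫ t in a..x, (x - t) ^ ((n : ℝ) + 1 - α - 1) * g t := by
      rw [← intervalIntegral.integral_const_mul]
      refine intervalIntegral.integral_congr fun t ht => ?_
      rw [Set.uIcc_of_le hax.le] at ht
      simp only [hw]
      rw [rpow_split hα0 hα1 n (sub_nonneg.2 ht.2)]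
      ring
    rw [e2]
    have e3 := genBinom_gamma α hα1 n
    simp only [hc]
    linear_combination (iteratedDeriv (n + 1) f x *
      ∫ t in a..x, (x - t) ^ ((n : ℝ) + 1 - α - 1) * g t) * e3
  · rw [hI2] at hI
    simp only [Finset.range_one, Finset.sum_singleton, Nat.cast_zero, sub_zero, iteratedDeriv_zero,
      hcap]
    rw [show genBinom α 0 = 1 by simp [genBinom], ← hI]
    field_simp
    ring
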